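/- Let n, k ≥ 1 be integers with n odd, and put d = gcd(n+1, k) and r = (n+1)/d. Then Coker ((1_k − X_k)·(1_k + X_k^{(n+1)/2})) ≅ ℤ ⊕ (ℤ/2ℤ)^{d−1} if r is even, and Coker ((1_k − X_k)·(1_k + X_k^{(n+1)/2})) ≅ ℤ^{(d+2)/2} if r is odd (in which case d is even). -/

import Mathlib

open Matrix Polynomial

/-- The `m × m` permutation matrix over `ℤ` of the cyclic permutation `(1,2,…,m)`:
its `(i,j)` entry is `1` iff `i ≡ j + 1 (mod m)`. -/
def cycMat (m : ℕ) : Matrix (Fin m) (Fin m) ℤ :=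
  Matrix.of fun i j => if ((j : ℕ) + 1) % m = (i : ℕ) then 1 else 0

/-- `X_m ^ p` for an integer exponent `p`, well defined since `X_m ^ m = 1`. -/
def cycMatZPow (m : ℕ) (p : ℤ) : Matrix (Fin m) (Fin m) ℤ :=
  cycMat m ^ (p % (m : ℤ)).toNat

/-- The cokernel `ℤ^m / A·ℤ^n` of an integer matrix. -/
abbrev coker {m n : Type} [Fintype m] [Fintype n] (A : Matrix m n ℤ) :=
  (m → ℤ) ⧸ LinearMap.range A.mulVecLin


/-- `s_p(A) = 1 - A + A² - ⋯ + (-1)^(p-1) A^(p-1)` for a square integer matrix `A`. -/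
def sMat {n : Type} [Fintype n] [DecidableEq n] (p : ℕ) (A : Matrix n n ℤ) :
    Matrix n n ℤ :=
  ∑ i ∈ Finset.range p, ((-1 : ℤ) ^ i) • A ^ i

/-!
Multiplication by the root `x` on `ℤ[X]/(X^k - 1)` has matrix `X_k` in the basis `1, x, …, x^(k-1)`,
so `Coker f(X_k) ≅ ℤ[X]/(f, X^k - 1)`. For `f = (1 - X)(1 + X^m)` with `m = (n+1)/2`, `f` divides
`X^(2m) - 1`, so `X^k - 1` may be replaced by `X^d - 1`, after which the exponent `m` of `f` only
matters modulo `d`: it is `0` if `r` is even and `d/2` if `r` is odd.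
In the first case `f` becomes `2(1 - X)`. The image of `1 - X_d` is the set of vectors of sum zero,
so the cokernel is detected by the sum and by all coordinates but one modulo `2`.
In the second case `f` itself divides `X^d - 1`, and the quotient of `ℤ[X]` by the polynomial
`(X - 1)(X^(d/2) + 1)` is free of rank `d/2 + 1`.
-/

section Ideals

variable {A : Type*} [CommRing A]

theorem span_pow_sub_one_pair (x : A) (a b : ℕ) :
    Ideal.span {x ^ a - 1, x ^ b - 1} = Ideal.span {x ^ a.gcd b - 1} := by
  apply le_antisymm
  · have hdvd {n : ℕ} (h : a.gcd b ∣ n) : x ^ a.gcd b - 1 ∣ x ^ n - 1 := by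
      obtain ⟨c, rfl⟩ := h
      exact pow_one_sub_dvd_pow_mul_sub_one x _ c
    simp only [Ideal.span_le, Set.insert_subset_iff, Set.singleton_subset_iff, SetLike.mem_coe,
      Ideal.mem_span_singleton]
    exact ⟨hdvd (a.gcd_dvd_left b), hdvd (a.gcd_dvd_right b)⟩
  · have hmk {n : ℕ} : x ^ n - 1 ∈ Ideal.span {x ^ a - 1, x ^ b - 1} ↔
        Ideal.Quotient.mk (Ideal.span {x ^ a - 1, x ^ b - 1}) x ^ n = 1 := by
      rw [← Ideal.Quotient.mk_eq_mk_iff_sub_mem, map_pow, map_one]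
    rw [Ideal.span_singleton_le_iff_mem, hmk, pow_gcd_eq_one, ← hmk, ← hmk]
    exact ⟨Ideal.subset_span (by simp), Ideal.subset_span (by simp)⟩

theorem span_pair_pow_sub_one_of_dvd {x f : A} {a : ℕ} (h : f ∣ x ^ a - 1) (b : ℕ) :
    Ideal.span {f, x ^ b - 1} = Ideal.span {f, x ^ a.gcd b - 1} := by
  rw [Ideal.span_insert f, ← Ideal.span_pair_eq_span_left_iff_dvd.mpr h, Ideal.span_insert f,
    sup_assoc, ← Ideal.span_insert, span_pow_sub_one_pair, ← Ideal.span_insert]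

theorem one_sub_mul_one_add_pow_dvd (x : A) (m : ℕ) :
    (1 - x) * (1 + x ^ m) ∣ x ^ (2 * m) - 1 := by
  have h : x ^ (2 * m) - 1 = -((1 - x ^ m) * (1 + x ^ m)) := by ring
  rw [h, dvd_neg]
  exact mul_dvd_mul_right (one_sub_dvd_one_sub_pow x m) _

theorem pow_sub_one_dvd_pow_sub_pow {d a b : ℕ} (x : A) (h : a ≡ b [MOD d]) :
    x ^ d - 1 ∣ x ^ a - x ^ b := by
  rw [← Ideal.mem_span_singleton, ← Ideal.Quotient.mk_eq_mk_iff_sub_mem, map_pow, map_pow]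
  refine pow_eq_pow_of_modEq h ?_
  rw [← map_pow, ← map_one (Ideal.Quotient.mk _), Ideal.Quotient.mk_eq_mk_iff_sub_mem]
  exact Ideal.mem_span_singleton_self _

theorem span_one_sub_mul_one_add_pow_congr {d a b : ℕ} (x : A) (h : a ≡ b [MOD d]) :
    Ideal.span {(1 - x) * (1 + x ^ a), x ^ d - 1} =
      Ideal.span {(1 - x) * (1 + x ^ b), x ^ d - 1} := by
  obtain ⟨c, hc⟩ := pow_sub_one_dvd_pow_sub_pow x h
  rw [← Ideal.span_pair_add_mul_right ((1 - x) * (1 + x ^ b)) (x ^ d - 1) ((1 - x) * c)]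
  congr 2
  linear_combination (1 - x) * hc

theorem span_one_sub_mul_one_add_pow_eq_gcd {k m a : ℕ} (x : A)
    (h : m ≡ a [MOD (2 * m).gcd k]) :
    Ideal.span {(1 - x) * (1 + x ^ m), x ^ k - 1} =
      Ideal.span {(1 - x) * (1 + x ^ a), x ^ (2 * m).gcd k - 1} := by
  rw [span_pair_pow_sub_one_of_dvd (one_sub_mul_one_add_pow_dvd x m),
    span_one_sub_mul_one_add_pow_congr x h]

theorem span_one_sub_mul_one_add_pow_eq_singleton {k m e : ℕ} (x : A)
    (hgcd : (2 * m).gcd k = 2 * e) (h : m ≡ e [MOD 2 * e]) :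
    Ideal.span {(1 - x) * (1 + x ^ m), x ^ k - 1} = Ideal.span {(x - 1) * (x ^ e + 1)} := by
  have hneg : (x - 1) * (x ^ e + 1) = -((1 - x) * (1 + x ^ e)) := by ring
  rw [span_one_sub_mul_one_add_pow_eq_gcd x (hgcd ▸ h), hgcd, hneg, Ideal.span_singleton_neg]
  exact Ideal.span_pair_eq_span_left_iff_dvd.mpr (one_sub_mul_one_add_pow_dvd x e)

end Ideals

section AdjoinRoot

variable {R : Type*} [CommRing R]

/-- The basis `1, x, …, x^(n-1)` of `R[X]/(g)` for a monic polynomial `g` of degree `n`. The degree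
is a separate variable, so that `Fin n` can be used in place of `Fin g.natDegree`. -/
noncomputable def adjoinRootBasis {g : R[X]} (hg : g.Monic) {n : ℕ} (hn : g.natDegree = n) :
    Module.Basis (Fin n) R (AdjoinRoot g) :=
  (AdjoinRoot.powerBasis' hg).basis.reindex (finCongr hn)

theorem adjoinRootBasis_apply {g : R[X]} (hg : g.Monic) {n : ℕ} (hn : g.natDegree = n)
    (j : Fin n) : adjoinRootBasis hg hn j = AdjoinRoot.root g ^ (j : ℕ) := by
  subst hn
  rw [adjoinRootBasis, Module.Basis.reindex_apply, PowerBasis.basis_eq_pow]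
  rfl

/-- The isomorphism `(R[X]/(g))/(f) ≅ R[X]/(f, g)`. -/
noncomputable def adjoinRootQuotientSpanMkEquiv (f g : R[X]) :
    (AdjoinRoot g ⧸ Ideal.span {AdjoinRoot.mk g f}) ≃+* R[X] ⧸ Ideal.span {f, g} :=
  have hmap : Ideal.span {Ideal.Quotient.mk (Ideal.span {g}) f} =
      (Ideal.span {f}).map (Ideal.Quotient.mk (Ideal.span {g})) := by
    rw [Ideal.map_span, Set.image_singleton]
  have hsup : Ideal.span {g} ⊔ Ideal.span {f} = Ideal.span {f, g} := by
    rw [sup_comm, Ideal.span_insert]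
  ((Ideal.quotEquivOfEq hmap).trans (DoubleQuot.quotQuotEquivQuotSup _ _)).trans
    (Ideal.quotEquivOfEq hsup)

theorem root_X_pow_sub_one_pow (k : ℕ) : AdjoinRoot.root (X ^ k - 1 : R[X]) ^ k = 1 := by
  have h := AdjoinRoot.mk_self (f := (X ^ k - 1 : R[X]))
  rwa [map_sub, map_pow, map_one, AdjoinRoot.mk_X, sub_eq_zero] at h

theorem monic_X_pow_sub_one {k : ℕ} (hk : k ≠ 0) : (X ^ k - 1 : R[X]).Monic := by
  simpa only [C_1] using monic_X_pow_sub_C (1 : R) hk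

theorem monic_X_sub_one_mul_X_pow_add_one {e : ℕ} (he : e ≠ 0) :
    ((X - 1) * (X ^ e + 1) : R[X]).Monic := by
  simpa only [C_1] using (monic_X_sub_C (1 : R)).mul (monic_X_pow_add_C (1 : R) he)

variable [Nontrivial R]

theorem natDegree_X_pow_sub_one (k : ℕ) : (X ^ k - 1 : R[X]).natDegree = k := by
  simpa only [C_1] using natDegree_X_pow_sub_C (n := k) (r := (1 : R))

theorem natDegree_X_sub_one_mul_X_pow_add_one {e : ℕ} (he : e ≠ 0) :
    ((X - 1) * (X ^ e + 1) : R[X]).natDegree = e + 1 := by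
  rw [← C_1, (monic_X_sub_C 1).natDegree_mul (monic_X_pow_add_C 1 he), natDegree_X_sub_C,
    natDegree_X_pow_add_C, add_comm]

end AdjoinRoot

section LeftMulMatrix

variable {ι R S : Type*} [Fintype ι] [DecidableEq ι] [CommRing R] [CommRing S] [Algebra R S]

theorem map_equivFun_span_singleton (b : Module.Basis ι R S) (x : S) :
    ((Ideal.span {x}).restrictScalars R).map (b.equivFun : S →ₗ[R] ι → R) =
      LinearMap.range (Algebra.leftMulMatrix b x).mulVecLin := by
  have hcomm : (Algebra.leftMulMatrix b x).mulVecLin ∘ₗ b.equivFun =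
      b.equivFun ∘ₗ LinearMap.mulLeft R x :=
    LinearMap.ext fun y => Algebra.leftMulMatrix_mulVec_repr b x y
  have hspan : (Ideal.span {x}).restrictScalars R = LinearMap.range (LinearMap.mulLeft R x) := by
    ext y
    simp [Ideal.mem_span_singleton', mul_comm]
  rw [hspan, ← LinearMap.range_comp, ← hcomm, LinearEquiv.range_comp]

/-- The quotient of a finite free algebra by a principal ideal `(x)`, as the cokernel of the matrix
of multiplication by `x`. -/
noncomputable def quotientSpanSingletonEquiv (b : Module.Basis ι R S) (x : S) :
    (S ⧸ Ideal.span {x}) ≃ₗ[R] (ι → R) ⧸ LinearMap.range (Algebra.leftMulMatrix b x).mulVecLin :=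
  (Submodule.Quotient.restrictScalarsEquiv R (Ideal.span {x})).symm.trans
    (Submodule.Quotient.equiv _ _ b.equivFun (map_equivFun_span_singleton b x))

end LeftMulMatrix

section CycMat

variable {k : ℕ} [NeZero k]

theorem cycMat_apply (i j : Fin k) : cycMat k i j = if i = j + 1 then 1 else 0 := by
  simp [cycMat, Fin.ext_iff, Fin.val_add, eq_comm]

theorem cycMat_mulVec (v : Fin k → ℤ) : cycMat k *ᵥ v = fun i => v (i - 1) := by
  ext i
  simp [mulVec, dotProduct, cycMat_apply, ← sub_eq_iff_eq_add]

theorem sum_cycMat_mulVec (v : Fin k → ℤ) : ∑ i, (cycMat k *ᵥ v) i = ∑ i, v i := by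
  rw [cycMat_mulVec]
  exact Equiv.sum_comp (Equiv.subRight 1) v

theorem single_sub_single_zero_mem_range_one_sub_cycMat (i : Fin k) :
    Pi.single i 1 - Pi.single 0 1 ∈ LinearMap.range (1 - cycMat k).mulVecLin := by
  obtain _ | k := k
  · exact i.elim0
  induction i using Fin.induction with
  | zero => simp
  | succ i ih =>
    have hstep : Pi.single i.castSucc 1 - Pi.single i.succ 1 ∈
        LinearMap.range (1 - cycMat (k + 1)).mulVecLin := by
      refine ⟨Pi.single i.castSucc 1, ?_⟩
      ext j
      simp [-mulVec_single, cycMat_mulVec, Pi.single_apply, sub_eq_iff_eq_add]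
    simpa only [sub_sub_sub_cancel_left] using sub_mem ih hstep

theorem mem_range_one_sub_cycMat_iff {v : Fin k → ℤ} :
    v ∈ LinearMap.range (1 - cycMat k).mulVecLin ↔ ∑ i, v i = 0 := by
  constructor
  · rintro ⟨w, rfl⟩
    simp only [mulVecLin_apply, sub_mulVec, one_mulVec, Pi.sub_apply, Finset.sum_sub_distrib,
      sum_cycMat_mulVec, sub_self]
  · intro hv
    have hdecomp : v = ∑ i, v i • (Pi.single i 1 - Pi.single 0 1) := by
      simp only [smul_sub, Finset.sum_sub_distrib, ← Finset.sum_smul, hv, zero_smul, sub_zero]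
      exact pi_eq_sum_univ' v
    rw [hdecomp]
    exact sum_mem fun i _ =>
      Submodule.smul_mem _ _ (single_sub_single_zero_mem_range_one_sub_cycMat i)

variable (k) in
/-- The basis `1, x, …, x^(k-1)` of the group ring `ℤ[X]/(X^k - 1)` of the cyclic group. -/
noncomputable def cyclicBasis : Module.Basis (Fin k) ℤ (AdjoinRoot (X ^ k - 1 : ℤ[X])) :=
  adjoinRootBasis (monic_X_pow_sub_one (NeZero.ne k)) (natDegree_X_pow_sub_one k)

theorem root_mul_cyclicBasis (j : Fin k) :
    AdjoinRoot.root _ * cyclicBasis k j = cyclicBasis k (j + 1) := by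
  rw [cyclicBasis, adjoinRootBasis_apply, adjoinRootBasis_apply, ← pow_succ',
    pow_eq_pow_mod _ (root_X_pow_sub_one_pow k), Fin.val_add, Fin.val_one', Nat.add_mod_mod]

theorem leftMulMatrix_cyclicBasis_root :
    Algebra.leftMulMatrix (cyclicBasis k) (AdjoinRoot.root _) = cycMat k := by
  ext i j
  rw [Algebra.leftMulMatrix_eq_repr_mul, root_mul_cyclicBasis, Module.Basis.repr_self,
    Finsupp.single_apply, cycMat_apply]
  simp only [eq_comm]

theorem leftMulMatrix_cyclicBasis_mk (f : ℤ[X]) :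
    Algebra.leftMulMatrix (cyclicBasis k) (AdjoinRoot.mk _ f) = aeval (cycMat k) f := by
  rw [← AdjoinRoot.aeval_eq, ← aeval_algHom_apply, leftMulMatrix_cyclicBasis_root]

/-- The isomorphism `Coker f(X_k) ≅ ℤ[X]/(f, X^k - 1)`, with the matrix `f(X_k)` given up to a
propositional equality. -/
noncomputable def cokerEquivOfAevalCycMatEq (f : ℤ[X]) {M : Matrix (Fin k) (Fin k) ℤ}
    (hM : aeval (cycMat k) f = M) : coker M ≃+ ℤ[X] ⧸ Ideal.span {f, X ^ k - 1} :=
  have hrange : LinearMap.range M.mulVecLin = LinearMap.range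
      (Algebra.leftMulMatrix (cyclicBasis k) (AdjoinRoot.mk _ f)).mulVecLin := by
    rw [leftMulMatrix_cyclicBasis_mk, hM]
  (Submodule.quotEquivOfEq _ _ hrange).toAddEquiv.trans
    ((quotientSpanSingletonEquiv (cyclicBasis k) (AdjoinRoot.mk _ f)).symm.toAddEquiv.trans
      (adjoinRootQuotientSpanMkEquiv f _).toAddEquiv)

end CycMat

section CokerSmulOneSubCycMat

variable (c l : ℕ)

/-- The map sending an integer vector to the sum of its coordinates together with the residues
modulo `c` of all of them but the first; it identifies the cokernel of `c(1 - X_(l+1))`. -/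
def sumProdTailCast : (Fin (l + 1) → ℤ) →ₗ[ℤ] ℤ × (Fin l → ZMod c) :=
  (∑ i, LinearMap.proj i).prod
    (LinearMap.pi fun i => (Int.castAddHom (ZMod c)).toIntLinearMap ∘ₗ LinearMap.proj i.succ)

theorem sumProdTailCast_apply (v : Fin (l + 1) → ℤ) :
    sumProdTailCast c l v = (∑ i, v i, fun i => (v i.succ : ZMod c)) := by
  simp [sumProdTailCast, Prod.ext_iff, funext_iff]

theorem sumProdTailCast_surjective : Function.Surjective (sumProdTailCast c l) := by
  rintro ⟨a, v⟩
  choose w hw using fun i => ZMod.intCast_surjective (v i)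
  refine ⟨Fin.cons (a - ∑ i, w i) w, ?_⟩
  simp [sumProdTailCast_apply, Fin.sum_univ_succ, hw]

variable {c l} in
theorem exists_eq_smul_of_sumProdTailCast_eq_zero {v : Fin (l + 1) → ℤ}
    (hv : sumProdTailCast c l v = 0) :
    ∃ w : Fin (l + 1) → ℤ, ∑ i, w i = 0 ∧ v = (c : ℤ) • w := by
  rw [sumProdTailCast_apply, Prod.mk_eq_zero, Fin.sum_univ_succ, add_eq_zero_iff_eq_neg] at hv
  obtain ⟨hsum, hmod⟩ := hv
  have hdvd (i : Fin l) : (c : ℤ) ∣ v i.succ :=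
    (ZMod.intCast_zmod_eq_zero_iff_dvd _ c).mp (congrFun hmod i)
  choose w hw using hdvd
  refine ⟨Fin.cons (-∑ i, w i) w, by simp [Fin.sum_univ_succ], ?_⟩
  ext i
  cases i using Fin.cases <;> simp [hw, hsum, Finset.mul_sum]

theorem ker_sumProdTailCast : LinearMap.ker (sumProdTailCast c l) =
    LinearMap.range ((c : ℤ) • (1 - cycMat (l + 1))).mulVecLin := by
  ext v
  rw [LinearMap.mem_ker]
  constructor
  · intro hv
    obtain ⟨w, hsum, rfl⟩ := exists_eq_smul_of_sumProdTailCast_eq_zero hv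
    obtain ⟨u, rfl⟩ := mem_range_one_sub_cycMat_iff.mpr hsum
    exact ⟨u, by rw [mulVecLin_apply, mulVecLin_apply, smul_mulVec]⟩
  · rintro ⟨u, rfl⟩
    have hsum := mem_range_one_sub_cycMat_iff.mp ⟨u, rfl⟩
    rw [mulVecLin_apply] at hsum
    rw [mulVecLin_apply, smul_mulVec, map_smul, sumProdTailCast_apply, hsum]
    ext <;> simp

/-- The isomorphism `Coker (c(1 - X_(l+1))) ≅ ℤ ⊕ (ℤ/cℤ)^l`. -/
noncomputable def cokerSmulOneSubCycMatEquiv :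
    coker ((c : ℤ) • (1 - cycMat (l + 1))) ≃ₗ[ℤ] ℤ × (Fin l → ZMod c) :=
  (Submodule.quotEquivOfEq _ _ (ker_sumProdTailCast c l).symm).trans
    ((sumProdTailCast c l).quotKerEquivOfSurjective (sumProdTailCast_surjective c l))

end CokerSmulOneSubCycMat

section CokerOneSubMulOneAddPow

variable {k m : ℕ} [NeZero k]

theorem nonempty_coker_equiv_of_gcd_dvd (h : (2 * m).gcd k ∣ m) :
    Nonempty (coker ((1 - cycMat k) * (1 + cycMat k ^ m)) ≃+
      ℤ × (Fin ((2 * m).gcd k - 1) → ZMod 2)) := by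
  obtain ⟨l, hl⟩ : ∃ l, (2 * m).gcd k = l + 1 :=
    Nat.exists_eq_add_one.mpr (Nat.gcd_pos_of_pos_right _ (NeZero.pos k))
  have hideal := span_one_sub_mul_one_add_pow_eq_gcd (X : ℤ[X]) (Nat.modEq_zero_iff_dvd.mpr h)
  rw [hl] at hideal ⊢
  have htwo : aeval (cycMat (l + 1)) ((1 - X) * (1 + X ^ 0) : ℤ[X]) =
      ((2 : ℕ) : ℤ) • (1 - cycMat (l + 1)) := by
    simp [one_add_one_eq_two, mul_two, two_smul]
  exact ⟨(cokerEquivOfAevalCycMatEq ((1 - X) * (1 + X ^ m)) (by simp)).trans <|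
    (Ideal.quotEquivOfEq hideal).toAddEquiv.trans <|
    (cokerEquivOfAevalCycMatEq _ htwo).symm.trans (cokerSmulOneSubCycMatEquiv 2 l).toAddEquiv⟩

theorem nonempty_coker_equiv_of_gcd_eq_two_mul {e : ℕ} (hgcd : (2 * m).gcd k = 2 * e)
    (h : m ≡ e [MOD 2 * e]) :
    Nonempty (coker ((1 - cycMat k) * (1 + cycMat k ^ m)) ≃+ (Fin (e + 1) → ℤ)) := by
  have he : e ≠ 0 := by
    rintro rfl
    exact Nat.gcd_ne_zero_right (NeZero.ne k) hgcd
  have hideal := span_one_sub_mul_one_add_pow_eq_singleton (X : ℤ[X]) hgcd h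
  let b := adjoinRootBasis (monic_X_sub_one_mul_X_pow_add_one (R := ℤ) he)
    (natDegree_X_sub_one_mul_X_pow_add_one he)
  exact ⟨(cokerEquivOfAevalCycMatEq ((1 - X) * (1 + X ^ m)) (by simp)).trans <|
    (Ideal.quotEquivOfEq hideal).toAddEquiv.trans b.equivFun.toAddEquiv⟩

end CokerOneSubMulOneAddPow

theorem stmt_10 (n k : ℕ) (hn : 1 ≤ n) (hk : 1 ≤ k) (hodd : Odd n) (d r : ℕ)
    (hd : d = Nat.gcd (n + 1) k) (hr : r = (n + 1) / d) :
    (Even r → Nonempty (coker ((1 - cycMat k) * (1 + cycMat k ^ ((n + 1) / 2))) ≃+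
      (ℤ × (Fin (d - 1) → ZMod 2)))) ∧
    (Odd r → Nonempty (coker ((1 - cycMat k) * (1 + cycMat k ^ ((n + 1) / 2))) ≃+
      (Fin ((d + 2) / 2) → ℤ))) := by
  have : NeZero k := ⟨Nat.one_le_iff_ne_zero.mp hk⟩
  obtain ⟨m, hm⟩ : 2 ∣ n + 1 := hodd.add_one.two_dvd
  rw [hm] at hd hr ⊢
  have hmul : 2 * m = d * r := by
    rw [hr, Nat.mul_div_cancel' (hd ▸ Nat.gcd_dvd_left _ _)]
  rw [Nat.mul_div_cancel_left m two_pos]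
  constructor
  · rintro ⟨s, rfl⟩
    subst hd
    exact nonempty_coker_equiv_of_gcd_dvd ⟨s, by linarith⟩
  · intro hrodd
    obtain ⟨e, rfl⟩ : 2 ∣ d :=
      (Nat.coprime_two_left.mpr hrodd).dvd_of_dvd_mul_right ⟨m, hmul.symm⟩
    obtain ⟨s, rfl⟩ := hrodd
    have hm_modEq : m ≡ e [MOD 2 * e] := by
      rw [show m = e + 2 * e * s by linarith]
      exact Nat.add_mul_mod_self_left e (2 * e) s
    rw [show (2 * e + 2) / 2 = e + 1 by omega]
    exact nonempty_coker_equiv_of_gcd_eq_two_mul hd.symm hm_modEq
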